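/- For every ρ ≥ 1 there exists a constant C(ρ) > 0 such that for every nondegenerate tetrahedron K ⊂ ℝ³ that is shape-regular with parameter ρ (i.e., h_K ≤ ρ · r_K), every affine function p : ℝ³ → ℝ, and every q ∈ P^f(K) (the span of the four products q_i = λ_j λ_k λ_l with {j, k, l} = {1,2,3,4} \ {i} of barycentric coordinate functions), one has ∫_K ‖∇(p + q)‖² ≥ C(ρ) ( ∫_K ‖∇p‖² + h_K⁻² ∫_K |q|² ). (The per-tetrahedron inequality proved in the paper's Lemma 3.7, face-bubble case.) -/

import Mathlib

open MeasureTheory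

/-! All simplices are affine images of one reference simplex, so the estimate there, which is a
compactness statement, has only to be transported. If `K = f(K₀)` with `f` affine of linear part
`L`, then `‖L‖` is controlled by `h_K`, and `‖L⁻¹‖` by the reciprocal of `r_K`; shape regularity
therefore bounds the condition number of `L`. On the reference simplex it suffices that a
nonzero combination of a linear form and face bubbles is never constant: bubbles vanish at the
vertices, which kills the linear form, and at the centroid of a face exactly one bubble
survives. -/

theorem exists_pos_forall_mul_le_of_homogeneous {V : Type*} [NormedAddCommGroup V]
    [NormedSpace ℝ V] [ProperSpace V] {k : ℕ} (hk : k ≠ 0) {M N : V → ℝ} (hM : Continuous M)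
    (hN : Continuous N) (hMsmul : ∀ (t : ℝ) v, M (t • v) = t ^ k * M v)
    (hNsmul : ∀ (t : ℝ) v, N (t • v) = t ^ k * N v) (hpos : ∀ v, v ≠ 0 → 0 < N v) :
    ∃ c : ℝ, 0 < c ∧ ∀ v, c * M v ≤ N v := by
  have sphere_pos : ∀ w ∈ Metric.sphere (0 : V) 1, 0 < N w := fun w hw =>
    hpos w (ne_zero_of_mem_unit_sphere ⟨w, hw⟩)
  obtain ⟨B, hB⟩ := (isCompact_sphere (0 : V) 1).exists_bound_of_continuousOn
    (f := fun w => M w / N w)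
    (hM.continuousOn.div hN.continuousOn fun w hw => (sphere_pos w hw).ne')
  have hB_pos : 0 < max B 1 := lt_max_of_lt_right one_pos
  have sphere_le : ∀ w ∈ Metric.sphere (0 : V) 1, M w ≤ max B 1 * N w := fun w hw =>
    (div_le_iff₀ (sphere_pos w hw)).1
      ((Real.le_norm_self _).trans ((hB w hw).trans (le_max_left _ _)))
  refine ⟨(max B 1)⁻¹, inv_pos.2 hB_pos, fun v => (inv_mul_le_iff₀ hB_pos).2 ?_⟩
  rcases eq_or_ne v 0 with rfl | hv
  · have hM0 : M 0 = 0 := by simpa [hk] using hMsmul 0 0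
    have hN0 : N 0 = 0 := by simpa [hk] using hNsmul 0 0
    rw [hM0, hN0, mul_zero]
  · have hnorm : ‖v‖ ≠ 0 := norm_ne_zero_iff.2 hv
    have hw := sphere_le (‖v‖⁻¹ • v) (by simp [norm_smul, hnorm])
    rw [← smul_inv_smul₀ hnorm v, hMsmul, hNsmul, mul_left_comm]
    gcongr

section Inradius

variable {E : Type*} [NormedAddCommGroup E] [NormedSpace ℝ E]

/-- The inradius `r_K` of a set: the supremum of the radii of the closed balls it contains. The
supremum is a real one, hence a junk value `0` when these radii are unbounded. -/
noncomputable def inradius (K : Set E) : ℝ :=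
  sSup {r : ℝ | ∃ x : E, Metric.closedBall x r ⊆ K}

theorem diam_image_pos_of_closedBall_subset [Nontrivial E] {X : Type*} [MetricSpace X]
    {f : E → X} (hf : Function.Injective f) {s : Set E} (hs : Bornology.IsBounded (f '' s)) {x : E}
    {r : ℝ} (hr : 0 < r) (hball : Metric.closedBall x r ⊆ s) : 0 < Metric.diam (f '' s) := by
  have hnhds : s ∈ nhds x := Filter.mem_of_superset (Metric.closedBall_mem_nhds x hr) hball
  have := Module.punctured_nhds_neBot ℝ E x
  exact Metric.diam_pos ((infinite_of_mem_nhds x hnhds).nontrivial.image hf) hs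

variable {F : Type*} [NormedAddCommGroup F] [NormedSpace ℝ F]

theorem opNorm_contLinear_mul_le_diam_image (f : E →ᴬ[ℝ] F) {s : Set E}
    (hf : Bornology.IsBounded (f '' s)) {x : E} {r : ℝ} (hball : Metric.closedBall x r ⊆ s) :
    ‖f.contLinear‖ * r ≤ Metric.diam (f '' s) := by
  rcases le_or_gt r 0 with hr | hr
  · exact (mul_nonpos_of_nonneg_of_nonpos (norm_nonneg _) hr).trans Metric.diam_nonneg
  rw [← le_div_iff₀ hr]
  refine ContinuousLinearMap.opNorm_le_of_unit_norm (div_nonneg Metric.diam_nonneg hr.le)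
    fun w hw => ?_
  have hx : x ∈ s := hball (Metric.mem_closedBall_self hr.le)
  have hxw : r • w + x ∈ s := hball (by simp [norm_smul, hw, abs_of_pos hr])
  have hdist := Metric.dist_le_diam_of_mem hf (Set.mem_image_of_mem f hxw)
    (Set.mem_image_of_mem f hx)
  rw [dist_eq_norm, ← vsub_eq_sub, ← f.contLinear_map_vsub, vsub_eq_sub, add_sub_cancel_right,
    map_smul, norm_smul, Real.norm_of_nonneg hr.le] at hdist
  rwa [le_div_iff₀' hr]

theorem opNorm_contLinear_mul_inradius_le_diam_image (f : E →ᴬ[ℝ] F) {s : Set E}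
    (hf : Bornology.IsBounded (f '' s)) :
    ‖f.contLinear‖ * inradius s ≤ Metric.diam (f '' s) := by
  rcases (norm_nonneg f.contLinear).eq_or_lt with h | h
  · simp [← h, Metric.diam_nonneg]
  · rw [← le_div_iff₀' h]
    refine Real.sSup_le ?_ (div_nonneg Metric.diam_nonneg h.le)
    rintro r ⟨x, hx⟩
    exact (le_div_iff₀' h).2 (opNorm_contLinear_mul_le_diam_image f hf hx)

theorem diam_image_mul_opNorm_contLinear_symm_le (f : E ≃ᴬ[ℝ] F) {s : Set E}
    (hs : Bornology.IsBounded s) {ρ : ℝ} (hρ : 0 ≤ ρ)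
    (hreg : Metric.diam (f '' s) ≤ ρ * inradius (f '' s)) :
    Metric.diam (f '' s) * ‖f.symm.toContinuousAffineMap.contLinear‖ ≤ ρ * Metric.diam s := by
  have hsymm : f.symm.toContinuousAffineMap '' (f '' s) = s := f.symm_image_image s
  have hle := opNorm_contLinear_mul_inradius_le_diam_image f.symm.toContinuousAffineMap
    (hsymm.symm ▸ hs)
  rw [hsymm] at hle
  calc _ ≤ ρ * inradius (f '' s) * ‖f.symm.toContinuousAffineMap.contLinear‖ := by gcongr
    _ = ρ * (‖f.symm.toContinuousAffineMap.contLinear‖ * inradius (f '' s)) := by ring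
    _ ≤ ρ * Metric.diam s := by gcongr

end Inradius

section Scaling

variable {E F : Type*} [NormedAddCommGroup E] [NormedSpace ℝ E]
  [NormedAddCommGroup F] [NormedSpace ℝ F]

theorem norm_fderiv_comp_continuousAffineMap_le {G : Type*} [NormedAddCommGroup G]
    [NormedSpace ℝ G] (f : E →ᴬ[ℝ] F) {u : F → G} {y : E} (hu : DifferentiableAt ℝ u (f y)) :
    ‖fderiv ℝ (u ∘ f) y‖ ≤ ‖fderiv ℝ u (f y)‖ * ‖f.contLinear‖ := by
  rw [fderiv_comp y hu f.differentiableAt, f.fderiv]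
  exact ContinuousLinearMap.opNorm_comp_le _ _

variable [FiniteDimensional ℝ E] [MeasurableSpace E] [BorelSpace E] (μ : Measure E)
  [μ.IsAddHaarMeasure]

theorem setIntegral_image_continuousAffineEquiv (f : E ≃ᴬ[ℝ] E) {s : Set E}
    (hs : MeasurableSet s) (g : E → F) :
    ∫ x in f '' s, g x ∂μ =
      |f.toContinuousAffineMap.contLinear.det| • ∫ y in s, g (f y) ∂μ := by
  rw [integral_image_eq_integral_abs_det_fderiv_smul μ hs
    (f := f) (fun _ _ => f.toContinuousAffineMap.hasFDerivWithinAt) f.injective.injOn g,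
    integral_smul]

theorem abs_det_mul_setIntegral_sq_norm_fderiv_comp_le (f : E ≃ᴬ[ℝ] E) {s : Set E}
    (hs : IsCompact s) {u : E → F} (hu : ContDiff ℝ 1 u) :
    |f.toContinuousAffineMap.contLinear.det| * ∫ y in s, ‖fderiv ℝ (u ∘ f) y‖ ^ 2 ∂μ ≤
      ‖f.toContinuousAffineMap.contLinear‖ ^ 2 * ∫ x in f '' s, ‖fderiv ℝ u x‖ ^ 2 ∂μ := by
  have huf : ContDiff ℝ 1 (u ∘ f) := hu.comp f.toContinuousAffineMap.contDiff
  have hcont : Continuous fun y => fderiv ℝ u (f y) :=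
    (hu.continuous_fderiv one_ne_zero).comp f.continuous
  rw [setIntegral_image_continuousAffineEquiv μ f hs.measurableSet, smul_eq_mul, mul_left_comm,
    ← integral_const_mul (‖_‖ ^ 2)]
  refine mul_le_mul_of_nonneg_left ?_ (abs_nonneg _)
  refine setIntegral_mono
    (((huf.continuous_fderiv one_ne_zero).norm.pow 2).continuousOn.integrableOn_compact hs)
    (((hcont.norm.pow 2).const_mul _).continuousOn.integrableOn_compact hs) fun y => ?_
  rw [← mul_pow, mul_comm]
  gcongr
  exact norm_fderiv_comp_continuousAffineMap_le f.toContinuousAffineMap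
    (hu.differentiable one_ne_zero _)

theorem setIntegral_image_sq_norm_fderiv_le (f : E ≃ᴬ[ℝ] E) {s : Set E}
    (hs : IsCompact s) {u : E → F} (hu : ContDiff ℝ 1 u) :
    ∫ x in f '' s, ‖fderiv ℝ u x‖ ^ 2 ∂μ ≤
      |f.toContinuousAffineMap.contLinear.det| *
        (‖f.symm.toContinuousAffineMap.contLinear‖ ^ 2 *
          ∫ y in s, ‖fderiv ℝ (u ∘ f) y‖ ^ 2 ∂μ) := by
  have huf : ContDiff ℝ 1 (u ∘ f) := hu.comp f.toContinuousAffineMap.contDiff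
  have hcont : Continuous fun y => fderiv ℝ u (f y) :=
    (hu.continuous_fderiv one_ne_zero).comp f.continuous
  rw [setIntegral_image_continuousAffineEquiv μ f hs.measurableSet, smul_eq_mul,
    ← integral_const_mul (‖_‖ ^ 2)]
  refine mul_le_mul_of_nonneg_left ?_ (abs_nonneg _)
  refine setIntegral_mono ((hcont.norm.pow 2).continuousOn.integrableOn_compact hs)
    ((huf.continuous_fderiv one_ne_zero).norm.pow 2 |>.const_mul _
      |>.continuousOn.integrableOn_compact hs) fun y => ?_
  have hcomp := norm_fderiv_comp_continuousAffineMap_le f.symm.toContinuousAffineMap (y := f y)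
    (huf.differentiable one_ne_zero _)
  have hu_eq : (u ∘ f) ∘ f.symm.toContinuousAffineMap = u := funext fun x => by simp
  rw [hu_eq, ContinuousAffineEquiv.coe_toContinuousAffineMap, f.symm_apply_apply] at hcomp
  rw [← mul_pow, mul_comm]
  gcongr

theorem abs_det_mul_sq_mul_setIntegral_sq_norm_fderiv_comp_le (f : E ≃ᴬ[ℝ] E) {s : Set E}
    (hs : IsCompact s) {x : E} {r : ℝ} (hr : 0 ≤ r) (hball : Metric.closedBall x r ⊆ s)
    {u : E → F} (hu : ContDiff ℝ 1 u) :
    |f.toContinuousAffineMap.contLinear.det| *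
        (r ^ 2 * ∫ y in s, ‖fderiv ℝ (u ∘ f) y‖ ^ 2 ∂μ) ≤
      Metric.diam (f '' s) ^ 2 * ∫ x in f '' s, ‖fderiv ℝ u x‖ ^ 2 ∂μ := by
  have hL := opNorm_contLinear_mul_le_diam_image f.toContinuousAffineMap
    (hs.image f.continuous).isBounded hball
  have henergy := abs_det_mul_setIntegral_sq_norm_fderiv_comp_le μ f hs hu
  calc _ = r ^ 2 * (|f.toContinuousAffineMap.contLinear.det| *
        ∫ y in s, ‖fderiv ℝ (u ∘ f) y‖ ^ 2 ∂μ) := by ring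
    _ ≤ r ^ 2 * (‖f.toContinuousAffineMap.contLinear‖ ^ 2 *
        ∫ x in f '' s, ‖fderiv ℝ u x‖ ^ 2 ∂μ) := by gcongr
    _ = (‖f.toContinuousAffineMap.contLinear‖ * r) ^ 2 *
        ∫ x in f '' s, ‖fderiv ℝ u x‖ ^ 2 ∂μ := by ring
    _ ≤ _ := by gcongr; exact hL

theorem sq_diam_mul_setIntegral_image_sq_norm_fderiv_le (f : E ≃ᴬ[ℝ] E) {s : Set E}
    (hs : IsCompact s) {ρ : ℝ} (hρ : 0 ≤ ρ)
    (hreg : Metric.diam (f '' s) ≤ ρ * inradius (f '' s)) {u : E → F} (hu : ContDiff ℝ 1 u) :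
    Metric.diam (f '' s) ^ 2 * ∫ x in f '' s, ‖fderiv ℝ u x‖ ^ 2 ∂μ ≤
      |f.toContinuousAffineMap.contLinear.det| *
        ((ρ * Metric.diam s) ^ 2 * ∫ y in s, ‖fderiv ℝ (u ∘ f) y‖ ^ 2 ∂μ) := by
  have hLinv := diam_image_mul_opNorm_contLinear_symm_le f hs.isBounded hρ hreg
  calc _ ≤ Metric.diam (f '' s) ^ 2 * (|f.toContinuousAffineMap.contLinear.det| *
        (‖f.symm.toContinuousAffineMap.contLinear‖ ^ 2 *
          ∫ y in s, ‖fderiv ℝ (u ∘ f) y‖ ^ 2 ∂μ)) := by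
        gcongr
        exact setIntegral_image_sq_norm_fderiv_le μ f hs hu
    _ = |f.toContinuousAffineMap.contLinear.det| *
        ((Metric.diam (f '' s) * ‖f.symm.toContinuousAffineMap.contLinear‖) ^ 2 *
          ∫ y in s, ‖fderiv ℝ (u ∘ f) y‖ ^ 2 ∂μ) := by ring
    _ ≤ _ := by gcongr

theorem stable_sum_image_continuousAffineEquiv [Nontrivial E] (f : E ≃ᴬ[ℝ] E) {s : Set E}
    (hs : IsCompact s) {x : E} {r ρ c : ℝ} (hr : 0 < r) (hball : Metric.closedBall x r ⊆ s)
    (hρ : 0 ≤ ρ) (hc : 0 ≤ c) (hreg : Metric.diam (f '' s) ≤ ρ * inradius (f '' s))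
    {p q : E → ℝ} (hp : ContDiff ℝ 1 p) (hq : ContDiff ℝ 1 q)
    (hstable : c * ((∫ y in s, ‖fderiv ℝ (p ∘ f) y‖ ^ 2 ∂μ) + ∫ y in s, (q ∘ f) y ^ 2 ∂μ) ≤
      ∫ y in s, ‖fderiv ℝ ((p + q) ∘ f) y‖ ^ 2 ∂μ) :
    c * r ^ 2 / ((ρ * Metric.diam s) ^ 2 + 1) *
        ((∫ x in f '' s, ‖fderiv ℝ p x‖ ^ 2 ∂μ) +
          (∫ x in f '' s, q x ^ 2 ∂μ) / Metric.diam (f '' s) ^ 2) ≤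
      ∫ x in f '' s, ‖fderiv ℝ (p + q) x‖ ^ 2 ∂μ := by
  have hlower :=
    abs_det_mul_sq_mul_setIntegral_sq_norm_fderiv_comp_le μ f hs hr.le hball (hp.add hq)
  have hp_upper := sq_diam_mul_setIntegral_image_sq_norm_fderiv_le μ f hs hρ hreg hp
  have hq_eq := setIntegral_image_continuousAffineEquiv μ f hs.measurableSet fun x => q x ^ 2
  rw [smul_eq_mul] at hq_eq
  have hdiam : 0 < Metric.diam (f '' s) := diam_image_pos_of_closedBall_subset f.injective
    (hs.image f.continuous).isBounded hr hball
  have hp_nonneg : 0 ≤ ∫ y in s, ‖fderiv ℝ (p ∘ f) y‖ ^ 2 ∂μ :=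
    integral_nonneg fun _ => by positivity
  have hq_nonneg : 0 ≤ ∫ y in s, (q ∘ f) y ^ 2 ∂μ := integral_nonneg fun _ => by positivity
  set d := |f.toContinuousAffineMap.contLinear.det|
  set h := Metric.diam (f '' s)
  set κ := (ρ * Metric.diam s) ^ 2
  set A := ∫ y in s, ‖fderiv ℝ (p ∘ f) y‖ ^ 2 ∂μ
  set B := ∫ y in s, (q ∘ f) y ^ 2 ∂μ
  have hκ : 0 ≤ κ := sq_nonneg _
  have : 0 ≤ d := abs_nonneg _
  have hupper : (∫ x in f '' s, ‖fderiv ℝ p x‖ ^ 2 ∂μ) + (∫ x in f '' s, q x ^ 2 ∂μ) / h ^ 2 ≤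
      (κ + 1) * (d * (A + B)) / h ^ 2 := by
    rw [add_div' _ _ _ (by positivity)]
    gcongr
    calc _ = h ^ 2 * (∫ x in f '' s, ‖fderiv ℝ p x‖ ^ 2 ∂μ) + d * B := by rw [hq_eq, mul_comm]; rfl
      _ ≤ d * (κ * A) + d * B := by gcongr
      _ ≤ d * (κ * A) + d * B + d * (A + κ * B) := le_add_of_nonneg_right (by positivity)
      _ = (κ + 1) * (d * (A + B)) := by ring
  calc _ ≤ c * r ^ 2 / (κ + 1) * ((κ + 1) * (d * (A + B)) / h ^ 2) := by gcongr
    _ = d * (r ^ 2 * (c * (A + B))) / h ^ 2 := by field_simp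
    _ ≤ d * (r ^ 2 * ∫ y in s, ‖fderiv ℝ ((p + q) ∘ f) y‖ ^ 2 ∂μ) / h ^ 2 := by gcongr
    _ ≤ _ := (div_le_iff₀' (by positivity)).2 hlower

end Scaling

section Reference

variable {E : Type*} [NormedAddCommGroup E] [NormedSpace ℝ E]

theorem eq_of_setIntegral_sq_norm_fderiv_eq_zero {F : Type*} [NormedAddCommGroup F]
    [NormedSpace ℝ F] [MeasurableSpace E] [OpensMeasurableSpace E] {μ : Measure E}
    [μ.IsOpenPosMeasure] [IsFiniteMeasureOnCompacts μ] {K : Set E} (hK : IsCompact K)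
    (hconv : Convex ℝ K) (hint : (interior K).Nonempty) {u : E → F} (hu : ContDiff ℝ 1 u)
    (hzero : ∫ x in K, ‖fderiv ℝ u x‖ ^ 2 ∂μ = 0) {x y : E} (hx : x ∈ K) (hy : y ∈ K) :
    u x = u y := by
  have hcont : Continuous fun x => ‖fderiv ℝ u x‖ ^ 2 :=
    (hu.continuous_fderiv one_ne_zero).norm.pow 2
  have hae := (setIntegral_eq_zero_iff_of_nonneg_ae (.of_forall fun _ => by positivity)
    (hcont.continuousOn.integrableOn_compact hK)).1 hzero
  have hgrad : Set.EqOn (fun x => ‖fderiv ℝ u x‖ ^ 2) 0 K :=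
    Measure.eqOn_of_ae_eq hae hcont.continuousOn continuousOn_const
      (hconv.closure_interior_eq_closure_of_nonempty_interior hint ▸ subset_closure)
  refine hconv.is_const_of_fderivWithin_eq_zero (𝕜 := ℝ)
    (hu.differentiable one_ne_zero).differentiableOn (fun z hz => ?_) hx hy
  rw [(hu.differentiable one_ne_zero z).fderivWithin (uniqueDiffOn_convex hconv hint z hz)]
  simpa using hgrad hz

variable {ι : Type*} [Fintype ι]

theorem fderiv_clm_add_sum_mul {β : ι → E → ℝ} {x : E} (hβ : ∀ i, DifferentiableAt ℝ (β i) x)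
    (ℓ : E →L[ℝ] ℝ) (c : ι → ℝ) :
    fderiv ℝ (fun y => ℓ y + ∑ i, c i * β i y) x = ℓ + ∑ i, c i • fderiv ℝ (β i) x :=
  (ℓ.hasFDerivAt.add
    (HasFDerivAt.fun_sum fun i _ => (hβ i).hasFDerivAt.const_mul (c i))).fderiv

theorem exists_pos_forall_mul_le_setIntegral_sq_norm_fderiv [FiniteDimensional ℝ E]
    [MeasurableSpace E] [OpensMeasurableSpace E] (μ : Measure E) [μ.IsOpenPosMeasure]
    [IsFiniteMeasureOnCompacts μ] {K : Set E} (hK : IsCompact K) (hconv : Convex ℝ K)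
    (hint : (interior K).Nonempty) {β : ι → E → ℝ} (hβ : ∀ i, ContDiff ℝ 1 (β i))
    (hind : ∀ (ℓ : E →L[ℝ] ℝ) (c : ι → ℝ) (k : ℝ),
      (∀ x ∈ K, ℓ x + ∑ i, c i * β i x = k) → ℓ = 0 ∧ c = 0) :
    ∃ C : ℝ, 0 < C ∧ ∀ (ℓ : E →L[ℝ] ℝ) (c : ι → ℝ),
      C * ((∫ _ in K, ‖ℓ‖ ^ 2 ∂μ) + ∫ x in K, (∑ i, c i * β i x) ^ 2 ∂μ) ≤
        ∫ x in K, ‖fderiv ℝ (fun y => ℓ y + ∑ i, c i * β i y) x‖ ^ 2 ∂μ := by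
  have hgrad_smul (t : ℝ) (v : (E →L[ℝ] ℝ) × (ι → ℝ)) (x : E) :
      (t • v).1 + ∑ i, (t • v).2 i • fderiv ℝ (β i) x =
        t • (v.1 + ∑ i, v.2 i • fderiv ℝ (β i) x) := by
    simp [smul_add, Finset.smul_sum, mul_smul]
  have hsum_smul (t : ℝ) (v : (E →L[ℝ] ℝ) × (ι → ℝ)) (x : E) :
      ∑ i, (t • v).2 i * β i x = t * ∑ i, v.2 i * β i x := by
    simp [Finset.mul_sum, mul_assoc]
  have : ∀ i, Continuous (β i) := fun i => (hβ i).continuous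
  have : ∀ i, Continuous (fderiv ℝ (β i)) := fun i => (hβ i).continuous_fderiv one_ne_zero
  have hfderiv (ℓ : E →L[ℝ] ℝ) (c : ι → ℝ) (x : E) :=
    fderiv_clm_add_sum_mul (fun i => (hβ i).differentiable one_ne_zero x) ℓ c
  have hpos (v : (E →L[ℝ] ℝ) × (ι → ℝ)) (hv : v ≠ 0) :
      0 < ∫ x in K, ‖v.1 + ∑ i, v.2 i • fderiv ℝ (β i) x‖ ^ 2 ∂μ := by
    refine (integral_nonneg fun _ => by positivity).lt_of_ne fun hzero => hv ?_
    obtain ⟨x₀, hx₀⟩ := hint.mono interior_subset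
    have hu : ContDiff ℝ 1 fun y => v.1 y + ∑ i, v.2 i * β i y := by fun_prop
    simp only [← hfderiv] at hzero
    exact Prod.ext_iff.2 (hind v.1 v.2 _ fun x hx =>
      eq_of_setIntegral_sq_norm_fderiv_eq_zero hK hconv hint hu hzero.symm hx hx₀)
  obtain ⟨C, hC, hle⟩ := exists_pos_forall_mul_le_of_homogeneous two_ne_zero
    (M := fun v : (E →L[ℝ] ℝ) × (ι → ℝ) =>
      (∫ _ in K, ‖v.1‖ ^ 2 ∂μ) + ∫ x in K, (∑ i, v.2 i * β i x) ^ 2 ∂μ)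
    (.add (continuous_parametric_integral_of_continuous (by fun_prop) hK)
      (continuous_parametric_integral_of_continuous (by fun_prop) hK))
    (continuous_parametric_integral_of_continuous (by fun_prop) hK)
    (fun t v => by
      simp only [hsum_smul, mul_pow, Prod.smul_fst, norm_smul, integral_const_mul,
        Real.norm_eq_abs, sq_abs, mul_add])
    (fun t v => by
      simp only [hgrad_smul, norm_smul, mul_pow, Real.norm_eq_abs, sq_abs, integral_const_mul])
    hpos
  exact ⟨C, hC, fun ℓ c => by simpa only [hfderiv] using hle (ℓ, c)⟩

end Reference

section Simplex

theorem exists_affineEquiv_apply_eq {k V V' P P' ι : Type*} [Ring k] [AddCommGroup V] [Module k V]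
    [AddTorsor V P] [AddCommGroup V'] [Module k V'] [AddTorsor V' P'] (b : AffineBasis ι k P)
    (b' : AffineBasis ι k P') : ∃ f : P ≃ᵃ[k] P', ∀ i, f (b i) = b' i := by
  obtain ⟨i₀⟩ := b.nonempty
  let e := (b.basisOf i₀).equiv (b'.basisOf i₀) (Equiv.refl _)
  refine ⟨(AffineEquiv.vaddConst k (b i₀)).symm.trans
    (e.toAffineEquiv.trans (AffineEquiv.vaddConst k (b' i₀))), fun i => ?_⟩
  rcases eq_or_ne i i₀ with rfl | hi
  · simp
  · have he := (b.basisOf i₀).equiv_apply ⟨i, hi⟩ (b'.basisOf i₀) (Equiv.refl _)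
    simp only [AffineBasis.basisOf_apply, Equiv.refl_apply] at he
    simp [e, he]

variable {𝕜 E F ι : Type*} [Field 𝕜] [LinearOrder 𝕜] [AddCommGroup E] [Module 𝕜 E]

theorem image_convexHull_range [AddCommGroup F] [Module 𝕜 F] {f : E →ᵃ[𝕜] F} {v : ι → E}
    {w : ι → F} (hf : ∀ i, f (v i) = w i) :
    f '' convexHull 𝕜 (Set.range v) = convexHull 𝕜 (Set.range w) := by
  rw [AffineMap.image_convexHull, ← Set.range_comp]
  exact congrArg _ (congrArg Set.range (funext hf))

theorem centroid_mem_convexHull_range [IsStrictOrderedRing 𝕜] (v : ι → E) {s : Finset ι}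
    (hs : s.Nonempty) :
    s.centroid 𝕜 v ∈ convexHull 𝕜 (Set.range v) :=
  affineCombination_mem_convexHull (fun i _ => by simp [Finset.centroidWeights_apply])
    (s.sum_centroidWeights_eq_one_of_nonempty 𝕜 hs)

end Simplex

section FaceBubble

variable {E : Type*} [NormedAddCommGroup E] [NormedSpace ℝ E] {ι : Type*} [Fintype ι]
  [DecidableEq ι]

/-- The face bubble of the face opposite to the vertex `b i`: the product of the barycentric
coordinates of the other vertices. -/
noncomputable def faceBubble (b : AffineBasis ι ℝ E) (i : ι) (x : E) : ℝ :=
  ∏ j ∈ Finset.univ.erase i, b.coord j x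

/-- The space `P^f(K)` spanned by the face bubbles of a simplex. -/
noncomputable def faceBubbleSpace (b : AffineBasis ι ℝ E) : Submodule ℝ (E → ℝ) :=
  Submodule.span ℝ (Set.range (faceBubble b))

theorem mem_faceBubbleSpace {b : AffineBasis ι ℝ E} {q : E → ℝ} :
    q ∈ faceBubbleSpace b ↔ ∃ c : ι → ℝ, ∀ x, q x = ∑ i, c i * faceBubble b i x := by
  simp [faceBubbleSpace, Submodule.mem_span_range_iff_exists_fun, funext_iff, eq_comm]

theorem contDiff_faceBubble [FiniteDimensional ℝ E] (b : AffineBasis ι ℝ E) (i : ι)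
    {n : WithTop ℕ∞} : ContDiff ℝ n (faceBubble b i) :=
  contDiff_prod fun j _ => ContinuousAffineMap.contDiff
    ⟨b.coord j, (b.coord j).continuous_of_finiteDimensional⟩

theorem contDiff_of_mem_faceBubbleSpace [FiniteDimensional ℝ E] {b : AffineBasis ι ℝ E}
    {q : E → ℝ} (hq : q ∈ faceBubbleSpace b) {n : WithTop ℕ∞} : ContDiff ℝ n q := by
  obtain ⟨c, hc⟩ := mem_faceBubbleSpace.1 hq
  exact funext hc ▸ ContDiff.sum fun i _ => contDiff_const.mul (contDiff_faceBubble b i)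

theorem faceBubble_apply_vertex (b : AffineBasis ι ℝ E) (hcard : 2 < Fintype.card ι) (i j : ι) :
    faceBubble b i (b j) = 0 := by
  obtain ⟨k, -, hk⟩ := Finset.exists_mem_notMem_of_card_lt_card (s := {i, j}) (t := Finset.univ)
    (Finset.card_le_two.trans_lt hcard)
  obtain ⟨hki, hkj⟩ : k ≠ i ∧ k ≠ j := by simpa using hk
  exact Finset.prod_eq_zero (Finset.mem_erase.2 ⟨hki, Finset.mem_univ k⟩) (b.coord_apply_ne hkj)

theorem faceBubble_apply_centroid_erase_ne_zero (b : AffineBasis ι ℝ E) (i : ι) :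
    faceBubble b i ((Finset.univ.erase i).centroid ℝ b) ≠ 0 :=
  Finset.prod_ne_zero_iff.2 fun j hj => by
    rw [b.coord_apply_centroid hj]
    exact inv_ne_zero (Nat.cast_ne_zero.2 (Finset.card_ne_zero_of_mem hj))

theorem faceBubble_apply_centroid_erase_of_ne (b : AffineBasis ι ℝ E) {i j : ι} (hij : i ≠ j) :
    faceBubble b i ((Finset.univ.erase j).centroid ℝ b) = 0 :=
  Finset.prod_eq_zero (Finset.mem_erase.2 ⟨hij.symm, Finset.mem_univ j⟩)
    (b.coord_apply_combination_of_notMem (Finset.notMem_erase j _)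
      (Finset.sum_centroidWeights_eq_one_of_nonempty ℝ _
        ⟨i, Finset.mem_erase.2 ⟨hij, Finset.mem_univ i⟩⟩))

theorem eq_zero_of_add_sum_faceBubble_eq_const (b : AffineBasis ι ℝ E)
    (hcard : 2 < Fintype.card ι) {ℓ : E →L[ℝ] ℝ} {c : ι → ℝ} {k : ℝ}
    (hconst : ∀ x ∈ convexHull ℝ (Set.range b), ℓ x + ∑ i, c i * faceBubble b i x = k) :
    ℓ = 0 ∧ c = 0 := by
  have hvertex (j : ι) : ℓ (b j) = k := by
    simpa [faceBubble_apply_vertex b hcard] using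
      hconst (b j) (subset_convexHull ℝ _ (Set.mem_range_self j))
  have hℓ_eq (x : E) : ℓ x = k := DFunLike.congr_fun
    (AffineMap.ext_on (f := ℓ.toLinearMap.toAffineMap) (g := AffineMap.const ℝ E k) b.tot
      (Set.forall_mem_range.2 hvertex)) x
  obtain rfl : k = 0 := by simpa using (hℓ_eq 0).symm
  refine ⟨ContinuousLinearMap.ext hℓ_eq, funext fun i => ?_⟩
  have : Nontrivial ι := Fintype.one_lt_card_iff_nontrivial.1 (by lia)
  have hcentroid := hconst _ (centroid_mem_convexHull_range b
    (Finset.univ_nontrivial.erase_nonempty (a := i)))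
  rw [hℓ_eq, zero_add, Finset.sum_eq_single i
    (fun j _ hj => by rw [faceBubble_apply_centroid_erase_of_ne b hj, mul_zero])
    (by simp)] at hcentroid
  exact (mul_eq_zero.1 hcentroid).resolve_right (faceBubble_apply_centroid_erase_ne_zero b i)

theorem faceBubble_comp {F : Type*} [NormedAddCommGroup F] [NormedSpace ℝ F]
    {b : AffineBasis ι ℝ E} {b' : AffineBasis ι ℝ F} {f : E →ᵃ[ℝ] F} (hf : ∀ i, f (b i) = b' i)
    (i : ι) (x : E) : faceBubble b' i (f x) = faceBubble b i x := by
  have hcoord (j : ι) : (b'.coord j).comp f = b.coord j :=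
    AffineMap.ext_on b.tot (Set.forall_mem_range.2 fun k => by
      simp [hf, AffineBasis.coord_apply])
  exact Finset.prod_congr rfl fun j _ => DFunLike.congr_fun (hcoord j) x

theorem comp_mem_faceBubbleSpace {F : Type*} [NormedAddCommGroup F] [NormedSpace ℝ F]
    {b : AffineBasis ι ℝ E} {b' : AffineBasis ι ℝ F} {f : E →ᵃ[ℝ] F} (hf : ∀ i, f (b i) = b' i)
    {q : F → ℝ} (hq : q ∈ faceBubbleSpace b') : q ∘ f ∈ faceBubbleSpace b := by
  obtain ⟨c, hc⟩ := mem_faceBubbleSpace.1 hq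
  exact mem_faceBubbleSpace.2 ⟨c, fun x => by simp [hc, faceBubble_comp hf]⟩

end FaceBubble

section StableSum

variable {E : Type*} [NormedAddCommGroup E] [NormedSpace ℝ E] [FiniteDimensional ℝ E]
  [MeasurableSpace E] [BorelSpace E] (μ : Measure E) [μ.IsAddHaarMeasure] {ι : Type*} [Fintype ι]
  [DecidableEq ι]

theorem exists_stable_sum_const (b : AffineBasis ι ℝ E) (hcard : 2 < Fintype.card ι) :
    ∃ C : ℝ, 0 < C ∧ ∀ p : E →ᴬ[ℝ] ℝ, ∀ q ∈ faceBubbleSpace b,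
      C * ((∫ x in convexHull ℝ (Set.range b), ‖fderiv ℝ p x‖ ^ 2 ∂μ) +
          ∫ x in convexHull ℝ (Set.range b), q x ^ 2 ∂μ) ≤
        ∫ x in convexHull ℝ (Set.range b), ‖fderiv ℝ (⇑p + q) x‖ ^ 2 ∂μ := by
  obtain ⟨C, hC, hle⟩ := exists_pos_forall_mul_le_setIntegral_sq_norm_fderiv μ
    ((Set.finite_range b).isCompact_convexHull ℝ) (convex_convexHull ℝ _)
    ⟨_, b.centroid_mem_interior_convexHull⟩ (fun i => contDiff_faceBubble b i)
    fun ℓ c k => eq_zero_of_add_sum_faceBubble_eq_const b hcard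
  refine ⟨C, hC, fun p q hq => ?_⟩
  obtain ⟨c, hc⟩ := mem_faceBubbleSpace.1 hq
  have hsum : ⇑p + q =
      fun x => p.contLinear x + ∑ i, c i * faceBubble b i x + p 0 := funext fun x => by
    have hp := p.contLinear_map_vsub x 0
    simp only [vsub_eq_sub, sub_zero] at hp
    simp only [Pi.add_apply, hc, hp]
    ring
  simpa only [hsum, hc, fderiv_add_const, p.fderiv] using hle p.contLinear c

theorem face_bubble_stable_sum_general (hE : 2 ≤ Module.finrank ℝ E) {ρ : ℝ} (hρ : 0 ≤ ρ) :
    ∃ C : ℝ, 0 < C ∧ ∀ b : AffineBasis ι ℝ E,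
      Metric.diam (convexHull ℝ (Set.range b)) ≤ ρ * inradius (convexHull ℝ (Set.range b)) →
      ∀ p : E →ᴬ[ℝ] ℝ, ∀ q ∈ faceBubbleSpace b,
        C * ((∫ x in convexHull ℝ (Set.range b), ‖fderiv ℝ p x‖ ^ 2 ∂μ) +
            (∫ x in convexHull ℝ (Set.range b), q x ^ 2 ∂μ) /
              Metric.diam (convexHull ℝ (Set.range b)) ^ 2) ≤
          ∫ x in convexHull ℝ (Set.range b), ‖fderiv ℝ (⇑p + q) x‖ ^ 2 ∂μ := by
  have : Nontrivial E := Module.nontrivial_of_finrank_pos (R := ℝ) (by lia)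
  rcases isEmpty_or_nonempty (AffineBasis ι ℝ E) with hempty | ⟨⟨b₀⟩⟩
  · exact ⟨1, one_pos, fun b => hempty.elim b⟩
  have hcard : 2 < Fintype.card ι := by have := b₀.card_eq_finrank_add_one; lia
  obtain ⟨c, hc, hstable⟩ := exists_stable_sum_const μ b₀ hcard
  obtain ⟨r, hr, hball⟩ := Metric.nhds_basis_closedBall.mem_iff.1
    (mem_interior_iff_mem_nhds.1 b₀.centroid_mem_interior_convexHull)
  set K₀ := convexHull ℝ (Set.range b₀)
  refine ⟨c * r ^ 2 / ((ρ * Metric.diam K₀) ^ 2 + 1), by positivity, fun b hreg p q hq => ?_⟩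
  obtain ⟨e, he⟩ := exists_affineEquiv_apply_eq b₀ b
  let f : E ≃ᴬ[ℝ] E := AffineEquiv.toContinuousAffineEquiv e
  have himage : f '' K₀ = convexHull ℝ (Set.range b) :=
    image_convexHull_range (f := e.toAffineMap) he
  rw [← himage] at hreg ⊢
  exact stable_sum_image_continuousAffineEquiv μ f ((Set.finite_range b₀).isCompact_convexHull ℝ)
    hr hball hρ hc.le hreg p.contDiff (contDiff_of_mem_faceBubbleSpace hq)
    (hstable (p.comp f.toContinuousAffineMap) _
      (comp_mem_faceBubbleSpace (f := e.toAffineMap) he hq))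

end StableSum

/-- The per-tetrahedron inequality in the paper's Lemma 3.7 (face-bubble case).
For every `ρ ≥ 1` there is `C(ρ) > 0` such that for every nondegenerate tetrahedron
`K ⊂ ℝ³` which is shape-regular with parameter `ρ` (`h_K ≤ ρ · r_K`, with `h_K` the
diameter and `r_K` the inradius), every affine `p` and every
`q ∈ P^f(K) = span{λⱼλₖλₗ : {j,k,l} ⊂ {1,2,3,4}}` (face bubbles of barycentric
coordinates), `∫_K ‖∇(p + q)‖² ≥ C(ρ) (∫_K ‖∇p‖² + h_K⁻² ∫_K |q|²)`. -/
theorem face_bubble_stable_sum :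
    ∀ ρ : ℝ, 1 ≤ ρ → ∃ C : ℝ, 0 < C ∧
      ∀ a : Fin 4 → EuclideanSpace ℝ (Fin 3), AffineIndependent ℝ a →
      ∀ K : Set (EuclideanSpace ℝ (Fin 3)), K = convexHull ℝ (Set.range a) →
      -- shape regularity: h_K ≤ ρ · r_K
      Metric.diam K ≤
        ρ * sSup {rad : ℝ | ∃ x : EuclideanSpace ℝ (Fin 3), Metric.closedBall x rad ⊆ K} →
      -- barycentric coordinate functions of K
      ∀ lam : Fin 4 → (EuclideanSpace ℝ (Fin 3) →ᵃ[ℝ] ℝ),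
        (∀ i j : Fin 4, lam i (a j) = if i = j then 1 else 0) →
      ∀ (p : EuclideanSpace ℝ (Fin 3) →ᵃ[ℝ] ℝ) (q : EuclideanSpace ℝ (Fin 3) → ℝ),
        q ∈ Submodule.span ℝ {f : EuclideanSpace ℝ (Fin 3) → ℝ |
          ∃ i : Fin 4, f = fun x => ∏ j ∈ Finset.univ.erase i, lam j x} →
        C * ((∫ x in K, ‖fderiv ℝ (fun y => p y) x‖ ^ 2) +
              (∫ x in K, (q x) ^ 2) / (Metric.diam K) ^ 2) ≤
          ∫ x in K, ‖fderiv ℝ (fun y => p y + q y) x‖ ^ 2 := by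
  intro ρ hρ
  obtain ⟨C, hC, hstable⟩ := face_bubble_stable_sum_general (ι := Fin 4)
    (volume : Measure (EuclideanSpace ℝ (Fin 3))) (by simp) (zero_le_one.trans hρ)
  refine ⟨C, hC, ?_⟩
  rintro a ha _ rfl hreg lam hlam p q hq
  let b : AffineBasis (Fin 4) ℝ (EuclideanSpace ℝ (Fin 3)) :=
    ⟨a, ha, ha.affineSpan_eq_top_iff_card_eq_finrank_add_one.2 (by simp)⟩
  have hcoord : b.coord = lam := funext fun i => AffineMap.ext_on b.tot
    (Set.forall_mem_range.2 fun j => (b.coord_apply i j).trans (hlam i j).symm)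
  have hbubbles : Set.range (faceBubble b) =
      {f | ∃ i, f = fun x => ∏ j ∈ Finset.univ.erase i, lam j x} := by
    ext f
    simp only [← hcoord, Set.mem_range, Set.mem_ofPred_eq, eq_comm (a := f)]
    rfl
  exact hstable b hreg ⟨p, p.continuous_of_finiteDimensional⟩ q
    (by rwa [faceBubbleSpace, hbubbles])
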